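/- arXiv:1208.1469 — 2 statements merged into one kernel-verified Lean document; each statement's English description precedes it below -/
import Mathlib

section
/- Discrete L^∞–H² embedding in two dimensions: for every periodic grid function φ and every index pair (i,j), |φ(i,j)|² ≤ C₂·‖φ‖_{2,2}², where C₂ = 4·max{1/(L_x·L_y), L_x/L_y, L_y/L_x, (L_x·L_y)/2}; in particular ‖φ‖_∞² ≤ C₂·‖φ‖_{2,2}². -/
open Finset

noncomputable section

/-- Periodic grid functions on an `m × n` grid (indices taken modulo `m` and `n`). -/
abbrev Grid (m n : ℕ) := ZMod m × ZMod n → ℝ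

/-- Forward difference in the `x` direction. -/
def Dx {m n : ℕ} (h : ℝ) (φ : Grid m n) : Grid m n :=
  fun p => (φ (p.1 + 1, p.2) - φ p) / h

/-- Forward difference in the `y` direction. -/
def Dy {m n : ℕ} (h : ℝ) (φ : Grid m n) : Grid m n :=
  fun p => (φ (p.1, p.2 + 1) - φ p) / h

/-- The five-point discrete Laplacian. -/
def lapH {m n : ℕ} (h : ℝ) (φ : Grid m n) : Grid m n :=
  fun p => (φ (p.1 + 1, p.2) + φ (p.1 - 1, p.2) + φ (p.1, p.2 + 1) + φ (p.1, p.2 - 1)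
    - 4 * φ p) / h ^ 2

/-- Discrete `L²` norm. -/
def norm2 {m n : ℕ} [NeZero m] [NeZero n] (h : ℝ) (φ : Grid m n) : ℝ :=
  Real.sqrt (h ^ 2 * ∑ p : ZMod m × ZMod n, φ p ^ 2)

/-- Discrete `L²` norm of the gradient. -/
def gradNorm2 {m n : ℕ} [NeZero m] [NeZero n] (h : ℝ) (φ : Grid m n) : ℝ :=
  Real.sqrt (h ^ 2 * ∑ p : ZMod m × ZMod n, (Dx h φ p ^ 2 + Dy h φ p ^ 2))

/-- Discrete `L^∞` norm. -/
def normInf {m n : ℕ} [NeZero m] [NeZero n] (φ : Grid m n) : ℝ :=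
  ⨆ p : ZMod m × ZMod n, |φ p|

/-- Discrete `H²` norm. -/
def norm22 {m n : ℕ} [NeZero m] [NeZero n] (h : ℝ) (φ : Grid m n) : ℝ :=
  Real.sqrt (norm2 h φ ^ 2 + gradNorm2 h φ ^ 2 + norm2 h (lapH h φ) ^ 2)

/-!
On a cyclic group, telescoping and Cauchy–Schwarz bound `(f y - f x)²` by the group order times the
sum of the squared differences of `f`; averaging over `x` bounds `f y ^ 2` by sums of squares of `f`
and of its difference. Applying this in one variable after the other on a product of two cyclic
groups bounds `φ q ^ 2` by sums of squares of `φ`, its two first differences and its mixed second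
difference. Since `Δ_[-e]` is the adjoint of `Δ_[e]` and differences commute, the pure second
differences satisfy `⟨Δ_[-a] Δ_[a] φ, Δ_[-b] Δ_[b] φ⟩ = ‖Δ_[b] Δ_[a] φ‖² ≥ 0`, so the Laplacian
controls the mixed difference, with a factor `2`.
-/

open scoped fwdDiff

section Differences

variable {M A : Type*} [AddCommMonoid M] [AddCommGroup A]

lemma fwdDiff_comm (a b : M) (f : M → A) : Δ_[a] (Δ_[b] f) = Δ_[b] (Δ_[a] f) := by
  funext x
  simp only [fwdDiff, add_right_comm x b a]
  abel

lemma sum_range_fwdDiff (e x : M) (f : M → A) (t : ℕ) :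
    ∑ s ∈ range t, Δ_[e] f (x + s • e) = f (x + t • e) - f x := by
  simpa only [fwdDiff, succ_nsmul, add_assoc, zero_nsmul, add_zero]
    using sum_range_sub (fun s ↦ f (x + s • e)) t

end Differences

section SummationByParts

variable {G : Type*} [AddCommGroup G] [Fintype G]

lemma sum_fwdDiff_neg_mul {R : Type*} [NonUnitalNonAssocRing R] (e : G) (u v : G → R) :
    ∑ x, Δ_[-e] u x * v x = ∑ x, u x * Δ_[e] v x := by
  have shift : ∑ x, u (x + -e) * v x = ∑ x, u x * v (x + e) := by
    simpa only [Equiv.coe_addRight, add_neg_cancel_right]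
      using (Equiv.sum_comp (Equiv.addRight e) fun x ↦ u (x + -e) * v x).symm
  simp only [fwdDiff, sub_mul, mul_sub, sum_sub_distrib, shift]

/-- The positive five-point Laplacian with unit mesh size on an abelian group, in the directions `a`
and `b`: each summand is `Δ_[-e] (Δ_[e] φ) x = 2 φ x - φ (x + e) - φ (x - e)`, hence the sign
is opposite to that of `lapH`. -/
def fwdDiffLaplacian {G A : Type*} [AddCommGroup G] [AddCommGroup A] (a b : G) (φ : G → A) :
    G → A :=
  fun x ↦ Δ_[-a] (Δ_[a] φ) x + Δ_[-b] (Δ_[b] φ) x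

variable {R : Type*} [CommRing R]

lemma sum_secondDiff_mul_secondDiff (a b : G) (φ : G → R) :
    ∑ x, Δ_[-a] (Δ_[a] φ) x * Δ_[-b] (Δ_[b] φ) x = ∑ x, Δ_[b] (Δ_[a] φ) x ^ 2 :=
  calc ∑ x, Δ_[-a] (Δ_[a] φ) x * Δ_[-b] (Δ_[b] φ) x
      = ∑ x, Δ_[-b] (Δ_[b] (Δ_[a] φ)) x * Δ_[a] φ x := by
        simp only [sum_fwdDiff_neg_mul a, fwdDiff_comm a, mul_comm]
    _ = ∑ x, Δ_[b] (Δ_[a] φ) x ^ 2 := by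
        simp only [sum_fwdDiff_neg_mul b, sq]

lemma two_mul_sum_sq_mixedDiff_le_sum_sq_fwdDiffLaplacian [LinearOrder R] [IsStrictOrderedRing R]
    (a b : G) (φ : G → R) :
    2 * ∑ x, Δ_[b] (Δ_[a] φ) x ^ 2 ≤ ∑ x, fwdDiffLaplacian a b φ x ^ 2 := by
  rw [← sum_secondDiff_mul_secondDiff, mul_sum]
  gcongr with x
  simp only [fwdDiffLaplacian]
  linarith [add_sq (Δ_[-a] (Δ_[a] φ) x) (Δ_[-b] (Δ_[b] φ) x),
    sq_nonneg (Δ_[-a] (Δ_[a] φ) x), sq_nonneg (Δ_[-b] (Δ_[b] φ) x)]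

end SummationByParts

section Cyclic

open AddSubgroup

lemma sum_range_add_nsmul_le_sum {M A : Type*} [AddLeftCancelMonoid M] [Fintype M] [AddCommMonoid A]
    [PartialOrder A] [IsOrderedAddMonoid A] {g : M → A} (hg : ∀ x, 0 ≤ g x) (x : M) {a : M} {t : ℕ}
    (ht : t ≤ addOrderOf a) :
    ∑ s ∈ range t, g (x + s • a) ≤ ∑ y, g y := by
  classical
  have inj : Set.InjOn (fun s : ℕ ↦ x + s • a) (range t) := fun s hs r hr hsr ↦
    nsmul_injOn_Iio_addOrderOf ((mem_range.1 hs).trans_le ht) ((mem_range.1 hr).trans_le ht)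
      (add_left_cancel hsr)
  rw [← sum_image (f := g) inj]
  exact sum_le_univ_sum_of_nonneg hg

variable {G R : Type*} [AddCommGroup G] [Fintype G] {a : G}

lemma sq_sub_le_card_mul_sum_sq_fwdDiff [CommRing R] [LinearOrder R] [IsStrictOrderedRing R]
    (ha : ∀ x, x ∈ zmultiples a) (f : G → R) (x y : G) :
    (f y - f x) ^ 2 ≤ Fintype.card G * ∑ z, Δ_[a] f z ^ 2 := by
  classical
  obtain ⟨t, ht, hty⟩ : ∃ t < addOrderOf a, t • a = y - x := by
    simpa using mem_zmultiples_iff_mem_range_addOrderOf.1 (ha (y - x))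
  calc (f y - f x) ^ 2 = (∑ s ∈ range t, Δ_[a] f (x + s • a)) ^ 2 := by
        rw [sum_range_fwdDiff, hty, add_sub_cancel]
    _ ≤ t * ∑ s ∈ range t, Δ_[a] f (x + s • a) ^ 2 := by
        simpa only [card_range] using sq_sum_le_card_mul_sum_sq (s := range t)
    _ ≤ Fintype.card G * ∑ z, Δ_[a] f z ^ 2 := by
        gcongr
        · exact ht.le.trans addOrderOf_le_card_univ
        · exact sum_range_add_nsmul_le_sum (fun z ↦ sq_nonneg (Δ_[a] f z)) x ht.le

variable [Field R] [LinearOrder R] [IsStrictOrderedRing R]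

lemma sq_le_sum_sq_add_sum_sq_fwdDiff (ha : ∀ x, x ∈ zmultiples a) (f : G → R) (y : G) :
    f y ^ 2 ≤ 2 / Fintype.card G * ∑ x, f x ^ 2 + 2 * Fintype.card G * ∑ x, Δ_[a] f x ^ 2 := by
  set N := (Fintype.card G : R) with hN
  have hN_pos : 0 < N := Nat.cast_pos.2 Fintype.card_pos
  have pointwise (x : G) : f y ^ 2 ≤ 2 * (f x ^ 2 + N * ∑ z, Δ_[a] f z ^ 2) :=
    calc f y ^ 2 = (f x + (f y - f x)) ^ 2 := by rw [add_sub_cancel]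
      _ ≤ 2 * (f x ^ 2 + (f y - f x) ^ 2) := add_sq_le
      _ ≤ _ := by gcongr; exact sq_sub_le_card_mul_sum_sq_fwdDiff ha f x y
  have summed : N * f y ^ 2 ≤ 2 * (∑ x, f x ^ 2 + N * (N * ∑ z, Δ_[a] f z ^ 2)) := by
    simpa only [sum_const, card_univ, nsmul_eq_mul, ← mul_sum, sum_add_distrib, ← hN]
      using sum_le_sum fun x (_ : x ∈ univ) ↦ pointwise x
  calc f y ^ 2 ≤ 2 * (∑ x, f x ^ 2 + N * (N * ∑ z, Δ_[a] f z ^ 2)) / N :=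
        (le_div_iff₀' hN_pos).2 summed
    _ = _ := by field_simp

variable {H : Type*} [AddCommGroup H] [Fintype H] {b : H}

lemma sum_slice_sq_le {X : Type*} [AddCommMonoid X] [Fintype X] (hb : ∀ y, y ∈ zmultiples b)
    (ψ : X × H → R) (y : H) :
    ∑ x, ψ (x, y) ^ 2 ≤
      2 / Fintype.card H * ∑ p, ψ p ^ 2 + 2 * Fintype.card H * ∑ p, Δ_[(0, b)] ψ p ^ 2 := by
  have fiber (x : X) := sq_le_sum_sq_add_sum_sq_fwdDiff hb (fun z ↦ ψ (x, z)) y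
  simpa only [sum_add_distrib, ← mul_sum, Fintype.sum_prod_type, fwdDiff, Prod.mk_add_mk, add_zero]
    using sum_le_sum fun x (_ : x ∈ univ) ↦ fiber x

lemma sq_le_sum_sq_mixedDiff (ha : ∀ x, x ∈ zmultiples a) (hb : ∀ y, y ∈ zmultiples b)
    (φ : G × H → R) (q : G × H) :
    φ q ^ 2 ≤ 4 / (Fintype.card G * Fintype.card H) * ∑ p, φ p ^ 2
      + 4 * (Fintype.card G / Fintype.card H) * ∑ p, Δ_[(a, 0)] φ p ^ 2
      + 4 * (Fintype.card H / Fintype.card G) * ∑ p, Δ_[(0, b)] φ p ^ 2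
      + 4 * (Fintype.card G * Fintype.card H) * ∑ p, Δ_[(0, b)] (Δ_[(a, 0)] φ) p ^ 2 := by
  obtain ⟨x, y⟩ := q
  calc φ (x, y) ^ 2
      ≤ 2 / Fintype.card G * ∑ z, φ (z, y) ^ 2
        + 2 * Fintype.card G * ∑ z, Δ_[(a, 0)] φ (z, y) ^ 2 := by
        simpa only [fwdDiff, Prod.mk_add_mk, add_zero]
          using sq_le_sum_sq_add_sum_sq_fwdDiff ha (fun z ↦ φ (z, y)) x
    _ ≤ 2 / Fintype.card G * (2 / Fintype.card H * ∑ p, φ p ^ 2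
          + 2 * Fintype.card H * ∑ p, Δ_[(0, b)] φ p ^ 2)
        + 2 * Fintype.card G * (2 / Fintype.card H * ∑ p, Δ_[(a, 0)] φ p ^ 2
          + 2 * Fintype.card H * ∑ p, Δ_[(0, b)] (Δ_[(a, 0)] φ) p ^ 2) := by
        gcongr <;> exact sum_slice_sq_le hb _ y
    _ = _ := by ring

lemma sq_le_sum_sq_fwdDiffLaplacian (ha : ∀ x, x ∈ zmultiples a) (hb : ∀ y, y ∈ zmultiples b)
    (φ : G × H → R) (q : G × H) :
    φ q ^ 2 ≤ 4 / (Fintype.card G * Fintype.card H) * ∑ p, φ p ^ 2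
      + 4 * (Fintype.card G / Fintype.card H) * ∑ p, Δ_[(a, 0)] φ p ^ 2
      + 4 * (Fintype.card H / Fintype.card G) * ∑ p, Δ_[(0, b)] φ p ^ 2
      + 2 * (Fintype.card G * Fintype.card H) * ∑ p, fwdDiffLaplacian (a, 0) (0, b) φ p ^ 2 := by
  refine (sq_le_sum_sq_mixedDiff ha hb φ q).trans (add_le_add_right ?_ _)
  calc 4 * (Fintype.card G * Fintype.card H : R) * ∑ p, Δ_[(0, b)] (Δ_[(a, 0)] φ) p ^ 2
      = 2 * (Fintype.card G * Fintype.card H)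
        * (2 * ∑ p, Δ_[(0, b)] (Δ_[(a, 0)] φ) p ^ 2) := by ring
    _ ≤ _ := by gcongr; exact two_mul_sum_sq_mixedDiff_le_sum_sq_fwdDiffLaplacian (a, 0) (0, b) φ

end Cyclic

lemma mem_zmultiples_one_zmod {m : ℕ} (x : ZMod m) : x ∈ AddSubgroup.zmultiples (1 : ZMod m) := by
  obtain ⟨k, rfl⟩ := ZMod.intCast_surjective x
  exact ⟨k, zsmul_one k⟩

lemma add_mul_le_max_mul_add {R : Type*} [Semiring R] [LinearOrder R] [IsOrderedRing R]
    {a b c d w x y z : R} (hw : 0 ≤ w) (hx : 0 ≤ x) (hy : 0 ≤ y) (hz : 0 ≤ z) :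
    a * w + b * x + c * y + d * z ≤ max (max a b) (max c d) * (w + x + y + z) := by
  simp only [mul_add]
  gcongr <;> simp

section Grid

variable {m n : ℕ}

lemma Dx_apply_eq_fwdDiff (h : ℝ) (φ : Grid m n) (p : ZMod m × ZMod n) :
    Dx h φ p = Δ_[(1, 0)] φ p / h := by
  simp [Dx, fwdDiff, Prod.add_def]

lemma Dy_apply_eq_fwdDiff (h : ℝ) (φ : Grid m n) (p : ZMod m × ZMod n) :
    Dy h φ p = Δ_[(0, 1)] φ p / h := by
  simp [Dy, fwdDiff, Prod.add_def]

lemma lapH_apply_eq_fwdDiffLaplacian (h : ℝ) (φ : Grid m n) (p : ZMod m × ZMod n) :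
    lapH h φ p = -fwdDiffLaplacian (1, 0) (0, 1) φ p / h ^ 2 := by
  simp only [lapH, fwdDiffLaplacian, fwdDiff, Prod.add_def, Prod.neg_mk, neg_zero, add_zero,
    neg_add_cancel_right, Prod.mk.eta, sub_eq_add_neg]
  ring

variable [NeZero m] [NeZero n]

lemma norm2_sq (h : ℝ) (φ : Grid m n) : norm2 h φ ^ 2 = h ^ 2 * ∑ p, φ p ^ 2 :=
  Real.sq_sqrt (by positivity)

lemma gradNorm2_sq {h : ℝ} (hh : h ≠ 0) (φ : Grid m n) :
    gradNorm2 h φ ^ 2 = ∑ p, Δ_[(1, 0)] φ p ^ 2 + ∑ p, Δ_[(0, 1)] φ p ^ 2 := by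
  rw [gradNorm2, Real.sq_sqrt (by positivity)]
  simp only [Dx_apply_eq_fwdDiff, Dy_apply_eq_fwdDiff, div_pow, ← add_div, ← sum_div,
    sum_add_distrib]
  field_simp

lemma norm2_lapH_sq {h : ℝ} (hh : h ≠ 0) (φ : Grid m n) :
    norm2 h (lapH h φ) ^ 2 = (∑ p, fwdDiffLaplacian (1, 0) (0, 1) φ p ^ 2) / h ^ 2 := by
  simp only [norm2_sq, lapH_apply_eq_fwdDiffLaplacian, div_pow, neg_sq, ← sum_div]
  field_simp

lemma norm22_sq (h : ℝ) (φ : Grid m n) :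
    norm22 h φ ^ 2 = norm2 h φ ^ 2 + gradNorm2 h φ ^ 2 + norm2 h (lapH h φ) ^ 2 :=
  Real.sq_sqrt (by positivity)

lemma exists_normInf_eq_abs (φ : Grid m n) : ∃ q, normInf φ = |φ q| :=
  (exists_eq_ciSup_of_finite (f := fun p ↦ |φ p|)).imp fun _ ↦ Eq.symm

lemma sq_le_mul_norm22_sq {h : ℝ} (hh : h ≠ 0) (φ : Grid m n) (q : ZMod m × ZMod n) :
    φ q ^ 2 ≤ 4 * max (max (1 / (m * h * (n * h))) (m * h / (n * h)))
      (max (n * h / (m * h)) (m * h * (n * h) / 2)) * norm22 h φ ^ 2 := by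
  have discrete := sq_le_sum_sq_fwdDiffLaplacian (a := (1 : ZMod m)) (b := (1 : ZMod n))
    mem_zmultiples_one_zmod mem_zmultiples_one_zmod φ q
  rw [norm22_sq, norm2_sq, gradNorm2_sq hh, norm2_lapH_sq hh, mul_assoc, ← add_assoc]
  rw [ZMod.card, ZMod.card] at discrete
  set S := ∑ p, φ p ^ 2
  set Sx := ∑ p, Δ_[(1, 0)] φ p ^ 2
  set Sy := ∑ p, Δ_[(0, 1)] φ p ^ 2
  set SΔ := ∑ p, fwdDiffLaplacian (1, 0) (0, 1) φ p ^ 2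
  calc φ q ^ 2
      ≤ 4 / (m * n) * S + 4 * (m / n) * Sx + 4 * (n / m) * Sy + 2 * (m * n) * SΔ := discrete
    _ = 4 * (1 / (m * h * (n * h)) * (h ^ 2 * S) + m * h / (n * h) * Sx + n * h / (m * h) * Sy
          + m * h * (n * h) / 2 * (SΔ / h ^ 2)) := by
        have hm : (m : ℝ) ≠ 0 := NeZero.ne _
        have hn : (n : ℝ) ≠ 0 := NeZero.ne _
        field_simp
        ring
    _ ≤ _ := by
        gcongr
        apply add_mul_le_max_mul_add <;> positivity

end Grid

/-- Discrete `L^∞`–`H²` embedding in two dimensions, with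
`C₂ = 4 max{1/(Lx Ly), Lx/Ly, Ly/Lx, Lx Ly / 2}`, `Lx = m h`, `Ly = n h`. -/
theorem discrete_Linfty_H2_embedding (m n : ℕ) [NeZero m] [NeZero n] (h : ℝ) (hh : 0 < h)
    (φ : Grid m n) :
    (∀ p : ZMod m × ZMod n,
      |φ p| ^ 2 ≤
        (4 * max (max (1 / (((m : ℝ) * h) * ((n : ℝ) * h))) (((m : ℝ) * h) / ((n : ℝ) * h)))
          (max (((n : ℝ) * h) / ((m : ℝ) * h)) ((((m : ℝ) * h) * ((n : ℝ) * h)) / 2)))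
        * norm22 h φ ^ 2) ∧
    normInf φ ^ 2 ≤
      (4 * max (max (1 / (((m : ℝ) * h) * ((n : ℝ) * h))) (((m : ℝ) * h) / ((n : ℝ) * h)))
        (max (((n : ℝ) * h) / ((m : ℝ) * h)) ((((m : ℝ) * h) * ((n : ℝ) * h)) / 2)))
      * norm22 h φ ^ 2 := by
  have pointwise (p : ZMod m × ZMod n) := (sq_abs (φ p)).trans_le (sq_le_mul_norm22_sq hh.ne' φ p)
  obtain ⟨q, hq⟩ := exists_normInf_eq_abs φ
  exact ⟨pointwise, hq ▸ pointwise q⟩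
end
end

section
/- Unconditional unique solvability of the second-order convex splitting scheme: for every β > 0, α > 0, every time step s > 0, and all periodic grid functions φ^{k−1}, φ^k, ψ^k, there exists a unique pair of periodic grid functions (φ^{k+1}, ψ^{k+1}) satisfying the second-order convex splitting scheme. -/
open Finset

noncomputable section

/-- The discrete chemical potential `μ` of the second-order convex splitting scheme,
built from `φ^{k−1} = φm`, `φ^k = φk` and the unknown `φ^{k+1} = φn`. -/
def chemPot {m n : ℕ} (α h : ℝ) (φm φk φn : Grid m n) : Grid m n :=
  fun p => (φn p ^ 2 + φk p ^ 2) / 2 * ((φn p + φk p) / 2)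
    + α * ((φn p + φk p) / 2)
    + lapH h (fun q => 3 * φk q - φm q) p
    + lapH h (lapH h (fun q => (φn q + φk q) / 2)) p

/-- The second-order convex splitting scheme for the MPFC equation:
`β(ψ^{k+1} − ψ^k) = s Δₕμ − s ψ^{k+1/2}` and `φ^{k+1} − φ^k = s ψ^{k+1/2}`. -/
def Scheme {m n : ℕ} (β α s h : ℝ) (φm φk ψk φn ψn : Grid m n) : Prop :=
  (∀ p, β * (ψn p - ψk p)
      = s * lapH h (chemPot α h φm φk φn) p - s * ((ψn p + ψk p) / 2)) ∧
  (∀ p, φn p - φk p = s * ((ψn p + ψk p) / 2))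

/-!
Eliminating `ψ^{k+1}` leaves an equation `u + L (T u) = g` for `u = φ^{k+1}`, where `L` is a
nonnegative multiple of `-Δₕ` and `T`, the chemical potential, is the gradient of an energy `Φ` and
is strongly monotone with modulus `α / 2`. Two solutions satisfy `L (T u - T v) = -(u - v)`;
pairing with `T u - T v` contradicts monotonicity unless `u = v`. For existence, minimize
`w ↦ ½⟪w, L w⟫ + Φ (g - L w)` over the range of `L`. Strong monotonicity makes `Φ` coercive and `L`
is injective on its range, so a minimizer `w` exists. The gradient `L (w - T (g - L w))` lies
in the range of `L`, hence vanishes at `w`, and `u = g - L w` is a solution.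
-/

open Filter WithLp
open scoped RealInnerProductSpace

section Hilbert

variable {E : Type*} [NormedAddCommGroup E] [InnerProductSpace ℝ E]

/-- Strong monotonicity of the operator `T` with modulus `a`; the case `a = 0` is monotonicity in
the sense of Minty. -/
def StronglyMonotone (a : ℝ) (T : E → E) : Prop :=
  ∀ x y, a * ‖x - y‖ ^ 2 ≤ ⟪T x - T y, x - y⟫

theorem StronglyMonotone.add {a b : ℝ} {T S : E → E} (hT : StronglyMonotone a T)
    (hS : StronglyMonotone b S) : StronglyMonotone (a + b) fun x => T x + S x := by
  intro x y
  rw [add_sub_add_comm, inner_add_left, add_mul]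
  exact add_le_add (hT x y) (hS x y)

theorem stronglyMonotone_zero_const (f : E) : StronglyMonotone 0 fun _ : E => f := by
  intro x y
  simp

theorem stronglyMonotone_zero_of_inner_nonneg {M : E →ₗ[ℝ] E} (hM : ∀ x, 0 ≤ ⟪M x, x⟫) :
    StronglyMonotone 0 M := by
  intro x y
  rw [zero_mul, ← map_sub]
  exact hM (x - y)

theorem StronglyMonotone.eq_of_add_map_eq {a : ℝ} {T : E → E} (hT : StronglyMonotone a T)
    (ha : 0 < a) {L : E →ₗ[ℝ] E} (hL : ∀ x, 0 ≤ ⟪L x, x⟫) {u v : E}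
    (huv : u + L (T u) = v + L (T v)) : u = v := by
  have hsub : L (T u - T v) = -(u - v) := by
    rw [map_sub, neg_sub, sub_eq_sub_iff_add_eq_add, add_comm, huv, add_comm]
  have hinner : ⟪T u - T v, u - v⟫ ≤ 0 := by
    have := hL (T u - T v)
    rwa [hsub, inner_neg_left, real_inner_comm, neg_nonneg] at this
  have hnorm : ‖u - v‖ ^ 2 ≤ 0 :=
    nonpos_of_mul_nonpos_right ((hT u v).trans hinner) ha
  exact sub_eq_zero.mp (norm_eq_zero.mp (pow_eq_zero_iff two_ne_zero |>.mp
    (hnorm.antisymm (sq_nonneg _))))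

theorem injective_comp_subtype_range_of_isSymmetric {L : E →ₗ[ℝ] E}
    (hL : L.IsSymmetric) :
    Function.Injective (L ∘ₗ (LinearMap.range L).subtype) := by
  refine (injective_iff_map_eq_zero _).mpr fun ⟨w, hw⟩ hLw => Subtype.ext ?_
  have hker : w ∈ (LinearMap.range L)ᗮ := hL.orthogonal_range ▸ hLw
  exact Submodule.disjoint_def.mp (Submodule.orthogonal_disjoint _) w hw hker

/-- The energy `w ↦ ½⟪w, L w⟫ + Φ (g - L w)`. If `w` is a critical point, then `u = g - L w`
solves `u + L (∇Φ u) = g`. -/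
def splittingEnergy (L : E →ₗ[ℝ] E) (Φ : E → ℝ) (g w : E) : ℝ :=
  ⟪w, L w⟫ / 2 + Φ (g - L w)

section Complete

variable [CompleteSpace E] {Φ Ψ : E → ℝ} {T : E → E} {a : ℝ}

theorem hasGradientAt_add {x u v : E} (hΦ : HasGradientAt Φ u x) (hΨ : HasGradientAt Ψ v x) :
    HasGradientAt (fun y => Φ y + Ψ y) (u + v) x := by
  rw [hasGradientAt_iff_hasFDerivAt, map_add]
  exact hΦ.hasFDerivAt.fun_add hΨ.hasFDerivAt

theorem hasGradientAt_inner (f x : E) : HasGradientAt (fun y => ⟪f, y⟫) f x :=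
  (InnerProductSpace.toDual ℝ E f).hasFDerivAt

theorem hasDerivAt_comp_line_of_hasGradientAt {x u v : E} {t : ℝ}
    (hΦ : HasGradientAt Φ u (x + t • v)) :
    HasDerivAt (fun r : ℝ => Φ (x + r • v)) ⟪u, v⟫ t := by
  have hline : HasDerivAt (fun r : ℝ => x + r • v) v t := by
    simpa using ((hasDerivAt_id t).smul_const v).const_add x
  exact hΦ.hasFDerivAt.comp_hasDerivAt t hline

theorem StronglyMonotone.add_sq_le_potential (hT : StronglyMonotone a T)
    (hΦ : ∀ x, HasGradientAt Φ (T x) x) (x v : E) :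
    Φ x + ⟪T x, v⟫ + a / 2 * ‖v‖ ^ 2 ≤ Φ (x + v) := by
  let gap : ℝ → ℝ := fun t => Φ (x + t • v) - t * ⟪T x, v⟫ - t ^ 2 * (a / 2 * ‖v‖ ^ 2)
  have hderiv (t : ℝ) :
      HasDerivAt gap (⟪T (x + t • v), v⟫ - ⟪T x, v⟫ - 2 * t * (a / 2 * ‖v‖ ^ 2)) t := by
    simpa using ((hasDerivAt_comp_line_of_hasGradientAt (hΦ (x + t • v))).fun_sub
      ((hasDerivAt_id t).mul_const ⟪T x, v⟫)).fun_sub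
      ((hasDerivAt_pow 2 t).mul_const (a / 2 * ‖v‖ ^ 2))
  have hderiv_nonneg : ∀ t ∈ interior (Set.Ici (0 : ℝ)), 0 ≤ deriv gap t := by
    intro t ht
    have ht : 0 < t := by simpa using ht
    have hmono := hT (x + t • v) x
    rw [add_sub_cancel_left, norm_smul, inner_smul_right, inner_sub_left, mul_pow,
      Real.norm_eq_abs, sq_abs] at hmono
    rw [(hderiv t).deriv]
    nlinarith
  have hgap : gap 0 ≤ gap 1 :=
    monotoneOn_of_deriv_nonneg (convex_Ici 0)
      (fun t _ => (hderiv t).continuousAt.continuousWithinAt)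
      (fun t _ => (hderiv t).differentiableAt.differentiableWithinAt) hderiv_nonneg
      Set.self_mem_Ici (Set.mem_Ici.mpr zero_le_one) zero_le_one
  simp only [gap, zero_smul, one_smul, add_zero] at hgap
  linarith

theorem StronglyMonotone.tendsto_potential_cocompact [ProperSpace E] (hT : StronglyMonotone a T)
    (ha : 0 < a) (hΦ : ∀ x, HasGradientAt Φ (T x) x) : Tendsto Φ (cocompact E) atTop := by
  have hbound (x : E) : Φ 0 + ‖x‖ * (a / 2 * ‖x‖ - ‖T 0‖) ≤ Φ x := by
    have hquad := hT.add_sq_le_potential hΦ 0 x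
    have hinner := neg_le_of_abs_le (abs_real_inner_le_norm (T 0) x)
    rw [zero_add] at hquad
    linarith
  have hnorm : Tendsto (fun x : E => ‖x‖) (cocompact E) atTop := tendsto_norm_cocompact_atTop
  refine tendsto_atTop_mono hbound (tendsto_atTop_add_const_left _ _ (hnorm.atTop_mul_atTop₀ ?_))
  exact tendsto_atTop_add_const_right _ _ (hnorm.const_mul_atTop (half_pos ha))

end Complete

section FiniteDimensional

variable [FiniteDimensional ℝ E] {Φ : E → ℝ} {T : E → E} {a : ℝ} {L : E →ₗ[ℝ] E}

theorem exists_mem_gradient_eq_zero (K : Submodule ℝ E) (hΦ : ∀ x, HasGradientAt Φ (T x) x)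
    (hcoercive : Tendsto (fun w : K => Φ w) (cocompact K) atTop)
    (hT : ∀ w ∈ K, T w ∈ K) : ∃ w ∈ K, T w = 0 := by
  have hcont : Continuous fun w : K => Φ w :=
    (continuous_iff_continuousAt.mpr fun x => (hΦ x).continuousAt).comp continuous_subtype_val
  obtain ⟨w, hw⟩ := hcont.exists_forall_le hcoercive
  have hcritical := IsLocalMin.hasFDerivAt_eq_zero (.of_forall hw)
    ((hΦ w).hasFDerivAt.comp w K.subtypeL.hasFDerivAt)
  refine ⟨w, w.2, (inner_self_eq_zero (𝕜 := ℝ)).mp ?_⟩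
  simpa using DFunLike.congr_fun hcritical ⟨T w, hT w w.2⟩

theorem hasGradientAt_half_inner_map_self (hL : L.IsSymmetric) (x : E) :
    HasGradientAt (fun y => ⟪y, L y⟫ / 2) (L x) x := by
  have hLx : HasFDerivAt L L.toContinuousLinearMap x := L.toContinuousLinearMap.hasFDerivAt
  rw [hasGradientAt_iff_hasFDerivAt]
  refine (((hasFDerivAt_id x).inner ℝ hLx).mul_const 2⁻¹).congr_fderiv ?_
  ext v
  have hxv : ⟪x, L v⟫ = ⟪L x, v⟫ := (hL x v).symm
  have hvx : ⟪v, L x⟫ = ⟪L x, v⟫ := real_inner_comm _ _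
  simp [hxv, hvx, ← two_mul]

theorem hasGradientAt_comp_const_sub_map (hL : L.IsSymmetric) {g u x : E}
    (hΦ : HasGradientAt Φ u (g - L x)) : HasGradientAt (fun y => Φ (g - L y)) (-L u) x := by
  have hLx : HasFDerivAt L L.toContinuousLinearMap x := L.toContinuousLinearMap.hasFDerivAt
  rw [hasGradientAt_iff_hasFDerivAt]
  refine (hΦ.hasFDerivAt.comp x (hLx.const_sub g)).congr_fderiv ?_
  ext v
  simp [hL u v]

theorem hasGradientAt_splittingEnergy (hL : L.IsSymmetric) (hΦ : ∀ x, HasGradientAt Φ (T x) x)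
    (g w : E) :
    HasGradientAt (splittingEnergy L Φ g) (L (w - T (g - L w))) w := by
  rw [map_sub, sub_eq_add_neg]
  exact hasGradientAt_add (hasGradientAt_half_inner_map_self hL w)
    (hasGradientAt_comp_const_sub_map hL (hΦ _))

theorem tendsto_splittingEnergy_range (hL : L.IsPositive)
    (hΦ : Tendsto Φ (cocompact E) atTop) (g : E) :
    Tendsto (fun w : LinearMap.range L => splittingEnergy L Φ g w) (cocompact _) atTop := by
  have hLw : Tendsto (fun w : LinearMap.range L => L w) (cocompact _) (cocompact E) :=
    (LinearMap.isClosedEmbedding_of_injective (LinearMap.ker_eq_bot.mpr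
      (injective_comp_subtype_range_of_isSymmetric hL.isSymmetric))).tendsto_cocompact
  have hshift : Tendsto (fun x => g - x) (cocompact E) (cocompact E) :=
    (Homeomorph.subLeft g).isClosedEmbedding.tendsto_cocompact
  refine tendsto_atTop_mono (fun w => ?_) (hΦ.comp (hshift.comp hLw))
  exact le_add_of_nonneg_left (div_nonneg (hL.inner_nonneg_right w) zero_le_two)

theorem exists_add_map_gradient_eq (hL : L.IsPositive) (hΦ : ∀ x, HasGradientAt Φ (T x) x)
    (hcoercive : Tendsto Φ (cocompact E) atTop) (g : E) : ∃ u, u + L (T u) = g := by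
  obtain ⟨w, -, hw⟩ := exists_mem_gradient_eq_zero (LinearMap.range L)
    (hasGradientAt_splittingEnergy hL.isSymmetric hΦ g)
    (tendsto_splittingEnergy_range hL hcoercive g) (fun _ _ => LinearMap.mem_range_self L _)
  refine ⟨g - L w, ?_⟩
  rw [map_sub, sub_eq_zero] at hw
  rw [← hw, sub_add_cancel]

theorem existsUnique_add_map_gradient_eq (hL : L.IsPositive) (hT : StronglyMonotone a T)
    (ha : 0 < a) (hΦ : ∀ x, HasGradientAt Φ (T x) x) (g : E) : ∃! u, u + L (T u) = g := by
  obtain ⟨u, hu⟩ := exists_add_map_gradient_eq hL hΦ (hT.tendsto_potential_cocompact ha hΦ) g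
  exact ⟨u, hu, fun v hv => hT.eq_of_add_map_eq ha hL.inner_nonneg_left (hv.trans hu.symm)⟩

end FiniteDimensional

end Hilbert

section Euclidean

variable {ι : Type*} [Fintype ι] {F N : ι → ℝ → ℝ} {a : ℝ}

theorem hasGradientAt_sum_apply {u : EuclideanSpace ℝ ι}
    (hF : ∀ i, HasDerivAt (F i) (N i (u i)) (u i)) :
    HasGradientAt (fun v : EuclideanSpace ℝ ι => ∑ i, F i (v i))
      (toLp 2 fun i => N i (u i)) u := by
  have hcoord (i : ι) : HasFDerivAt (fun v : EuclideanSpace ℝ ι => F i (v i))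
      (N i (u i) • EuclideanSpace.proj i) u :=
    (hF i).comp_hasFDerivAt u (EuclideanSpace.proj (𝕜 := ℝ) i).hasFDerivAt
  rw [hasGradientAt_iff_hasFDerivAt]
  refine (HasFDerivAt.fun_sum fun i _ => hcoord i).congr_fderiv ?_
  ext v
  simp [PiLp.inner_apply, mul_comm]

theorem stronglyMonotone_pointwise
    (hN : ∀ i x y, a * (x - y) ^ 2 ≤ (N i x - N i y) * (x - y)) :
    StronglyMonotone a fun u : EuclideanSpace ℝ ι => toLp 2 fun i => N i (u i) := by
  intro u v
  simp only [EuclideanSpace.real_norm_sq_eq, PiLp.inner_apply, mul_sum, PiLp.sub_apply,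
    RCLike.inner_apply, conj_trivial]
  exact sum_le_sum fun i _ => (hN i (u i) (v i)).trans_eq (mul_comm _ _)

theorem existsUnique_semilinear_eq {L M : EuclideanSpace ℝ ι →ₗ[ℝ] EuclideanSpace ℝ ι}
    (hL : L.IsPositive) (hM : M.IsPositive) (ha : 0 < a)
    (hF : ∀ i x, HasDerivAt (F i) (N i x) x)
    (hN : ∀ i x y, a * (x - y) ^ 2 ≤ (N i x - N i y) * (x - y)) (f g : EuclideanSpace ℝ ι) :
    ∃! u : EuclideanSpace ℝ ι, u + L (toLp 2 (fun i => N i (u i)) + M u + f) = g := by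
  have hmono := ((stronglyMonotone_pointwise hN).add
    (stronglyMonotone_zero_of_inner_nonneg hM.inner_nonneg_left)).add
    (stronglyMonotone_zero_const f)
  rw [add_zero, add_zero] at hmono
  exact existsUnique_add_map_gradient_eq hL hmono ha
    (fun u => hasGradientAt_add (hasGradientAt_add (hasGradientAt_sum_apply fun i => hF i (u i))
      (hasGradientAt_half_inner_map_self hM.isSymmetric u)) (hasGradientAt_inner f u)) g

end Euclidean

section SummationByParts

theorem sum_mul_second_difference {G R : Type*} [Fintype G] [AddGroup G] [CommRing R]
    (e : G) (x y : G → R) :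
    ∑ p, x p * (y (p + e) - 2 * y p + y (p - e)) =
      -∑ p, (x (p + e) - x p) * (y (p + e) - y p) := by
  have hshift (f : G → R) : ∑ p, f (p + e) = ∑ p, f p := Equiv.sum_comp (Equiv.addRight e) f
  have hback := hshift fun p => x p * (y p - y (p - e))
  simp only [add_sub_cancel_right] at hback
  calc ∑ p, x p * (y (p + e) - 2 * y p + y (p - e))
      = ∑ p, x p * (y (p + e) - y p) - ∑ p, x p * (y p - y (p - e)) := by
        rw [← sum_sub_distrib]
        exact sum_congr rfl fun p _ => by ring
    _ = ∑ p, x p * (y (p + e) - y p) - ∑ p, x (p + e) * (y (p + e) - y p) := by rw [hback]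
    _ = -∑ p, (x (p + e) - x p) * (y (p + e) - y p) := by
        rw [← sum_sub_distrib, ← sum_neg_distrib]
        exact sum_congr rfl fun p _ => by ring

variable {m n : ℕ} [NeZero m] [NeZero n]

theorem sum_mul_lapH (h : ℝ) (x y : Grid m n) :
    ∑ p, x p * lapH h y p = -∑ p, (Dx h x p * Dx h y p + Dy h x p * Dy h y p) := by
  have hx := sum_mul_second_difference ((1, 0) : ZMod m × ZMod n) x y
  have hy := sum_mul_second_difference ((0, 1) : ZMod m × ZMod n) x y
  calc ∑ p, x p * lapH h y p
      = (∑ p, x p * (y (p + (1, 0)) - 2 * y p + y (p - (1, 0))) +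
          ∑ p, x p * (y (p + (0, 1)) - 2 * y p + y (p - (0, 1)))) / h ^ 2 := by
        rw [← sum_add_distrib, sum_div]
        refine sum_congr rfl fun ⟨i, j⟩ _ => ?_
        simp only [lapH, Prod.mk_add_mk, Prod.mk_sub_mk, add_zero, sub_zero]
        ring
    _ = -∑ p, (Dx h x p * Dx h y p + Dy h x p * Dy h y p) := by
        rw [hx, hy, ← neg_add, ← sum_add_distrib, neg_div, sum_div]
        refine congrArg _ (sum_congr rfl fun ⟨i, j⟩ _ => ?_)
        simp only [Dx, Dy, Prod.mk_add_mk, add_zero]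
        ring

end SummationByParts

section Laplacian

variable {m n : ℕ}

/-- The space of periodic grid functions with its `ℓ²` inner product; `Grid m n` itself carries
the sup norm. -/
abbrev GridL2 (m n : ℕ) := EuclideanSpace ℝ (ZMod m × ZMod n)

/-- The discrete Laplacian `lapH h` as a linear operator on `GridL2 m n`. -/
def lapL2 (h : ℝ) : GridL2 m n →ₗ[ℝ] GridL2 m n where
  toFun u := toLp 2 (lapH h u.ofLp)
  map_add' u v := by
    ext p
    simp only [lapH, PiLp.add_apply]
    ring
  map_smul' c u := by
    ext p
    simp only [lapH, PiLp.smul_apply, smul_eq_mul, RingHom.id_apply]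
    ring

theorem lapL2_apply (h : ℝ) (u : GridL2 m n) (p : ZMod m × ZMod n) :
    lapL2 h u p = lapH h u p :=
  rfl

variable [NeZero m] [NeZero n]

theorem inner_lapL2 (h : ℝ) (u v : GridL2 m n) :
    ⟪u, lapL2 h v⟫ = -∑ p, (Dx h u p * Dx h v p + Dy h u p * Dy h v p) := by
  rw [← sum_mul_lapH]
  simp [PiLp.inner_apply, lapL2_apply, mul_comm]

theorem isSymmetric_lapL2 (h : ℝ) : (lapL2 (m := m) (n := n) h).IsSymmetric := by
  intro u v
  rw [real_inner_comm, inner_lapL2, inner_lapL2]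
  simp only [mul_comm]

theorem isPositive_neg_lapL2 (h : ℝ) : (-lapL2 (m := m) (n := n) h).IsPositive := by
  refine (LinearMap.isPositive_iff _).mpr ⟨fun u v => ?_, fun u => ?_⟩
  · rw [LinearMap.neg_apply, LinearMap.neg_apply, inner_neg_left, inner_neg_right,
      isSymmetric_lapL2 h u v]
  · rw [LinearMap.neg_apply, inner_neg_left, real_inner_comm, inner_lapL2, neg_neg]
    exact sum_nonneg fun p _ => add_nonneg (mul_self_nonneg _) (mul_self_nonneg _)

theorem isPositive_lapL2_comp_lapL2 (h : ℝ) :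
    (lapL2 (m := m) (n := n) h ∘ₗ lapL2 h).IsPositive := by
  have hadj : (lapL2 (m := m) (n := n) h).adjoint = lapL2 h :=
    (LinearMap.isSymmetric_iff_isSelfAdjoint _).mp (isSymmetric_lapL2 h)
  simpa only [hadj] using (lapL2 (m := m) (n := n) h).isPositive_adjoint_comp_self

end Laplacian

section Scalar

/-- The pointwise nonlinearity of the chemical potential, as a function of the new value `x` for
the old value `c`. -/
def splitForce (α c x : ℝ) : ℝ :=
  (x ^ 2 + c ^ 2) / 2 * ((x + c) / 2) + α * ((x + c) / 2)

/-- The antiderivative of `splitForce α c`: the pointwise part of the energy whose gradient is the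
chemical potential. -/
def splitPotential (α c x : ℝ) : ℝ :=
  x ^ 4 / 16 + c * x ^ 3 / 12 + c ^ 2 * x ^ 2 / 8 + c ^ 3 * x / 4 + α * (x + c) ^ 2 / 4

theorem hasDerivAt_splitPotential (α c x : ℝ) :
    HasDerivAt (splitPotential α c) (splitForce α c x) x := by
  have hquartic := (hasDerivAt_pow 4 x).div_const 16
  have hcubic := ((hasDerivAt_pow 3 x).const_mul c).div_const 12
  have hsquare := ((hasDerivAt_pow 2 x).const_mul (c ^ 2)).div_const 8
  have hlinear := ((hasDerivAt_id x).const_mul (c ^ 3)).div_const 4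
  have hshifted := ((((hasDerivAt_id x).add_const c).fun_pow 2).const_mul α).div_const 4
  refine ((((hquartic.fun_add hcubic).fun_add hsquare).fun_add hlinear).fun_add
    hshifted).congr_deriv ?_
  simp only [splitForce, id]
  ring

theorem mul_sub_sq_le_splitForce_sub_mul_sub (α c x y : ℝ) :
    α / 2 * (x - y) ^ 2 ≤ (splitForce α c x - splitForce α c y) * (x - y) := by
  have hexpand : (splitForce α c x - splitForce α c y) * (x - y) = α / 2 * (x - y) ^ 2 +
      (x - y) ^ 2 * ((x + y + c) ^ 2 + x ^ 2 + y ^ 2 + c ^ 2) / 8 := by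
    simp only [splitForce]
    ring
  rw [hexpand]
  exact le_add_of_nonneg_right (by positivity)

end Scalar

section Solvability

variable {m n : ℕ}

theorem toLp_chemPot (α h : ℝ) (φm φk : Grid m n) (u : GridL2 m n) :
    toLp 2 (chemPot α h φm φk u) =
      toLp 2 (fun p => splitForce α (φk p) (u p)) + ((1 / 2 : ℝ) • (lapL2 h ∘ₗ lapL2 h)) u +
        lapL2 h (toLp 2 ((3 : ℝ) • φk - φm + (1 / 2 : ℝ) • lapH h φk)) := by
  ext p
  simp only [chemPot, splitForce, lapH, lapL2_apply, LinearMap.smul_apply, LinearMap.comp_apply,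
    PiLp.add_apply, PiLp.smul_apply, Pi.add_apply, Pi.sub_apply, Pi.smul_apply, smul_eq_mul]
  ring

theorem existsUnique_sub_smul_lapH_chemPot_eq [NeZero m] [NeZero n] {α κ : ℝ} (hα : 0 < α)
    (hκ : 0 ≤ κ) (h : ℝ) (φm φk g : Grid m n) :
    ∃! φn : Grid m n, φn - κ • lapH h (chemPot α h φm φk φn) = g := by
  have hsolve := existsUnique_semilinear_eq ((isPositive_neg_lapL2 h).smul_of_nonneg hκ)
    ((isPositive_lapL2_comp_lapL2 h).smul_of_nonneg (one_half_pos (α := ℝ)).le) (half_pos hα)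
    (fun p => hasDerivAt_splitPotential α (φk p))
    (fun p => mul_sub_sq_le_splitForce_sub_mul_sub α (φk p))
    (lapL2 h (toLp 2 ((3 : ℝ) • φk - φm + (1 / 2 : ℝ) • lapH h φk))) (toLp 2 g)
  simp only [← toLp_chemPot] at hsolve
  refine ((WithLp.equiv 2 (Grid m n)).existsUnique_congr fun u => ?_).mp hsolve
  rw [← (WithLp.equiv 2 (Grid m n)).injective.eq_iff]
  simp [lapL2, sub_eq_add_neg]

theorem scheme_iff {β s : ℝ} (hs : s ≠ 0) (hβs : 2 * β + s ≠ 0) (α h : ℝ)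
    (φm φk ψk φn ψn : Grid m n) :
    Scheme β α s h φm φk ψk φn ψn ↔
      φn - (s ^ 2 / (2 * β + s)) • lapH h (chemPot α h φm φk φn) =
          φk + (2 * β * s / (2 * β + s)) • ψk ∧
        ψn = (2 / s) • (φn - φk) - ψk := by
  have hψ : (∀ p, φn p - φk p = s * ((ψn p + ψk p) / 2)) ↔
      ψn = (2 / s) • (φn - φk) - ψk := by
    rw [funext_iff]
    refine forall_congr' fun p => ?_
    simp only [Pi.sub_apply, Pi.smul_apply, smul_eq_mul]
    field_simp
    constructor <;> intro hp <;> linarith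
  rw [Scheme, hψ]
  refine and_congr_left fun hψn => ?_
  rw [funext_iff]
  refine forall_congr' fun p => ?_
  simp only [hψn, Pi.sub_apply, Pi.add_apply, Pi.smul_apply, smul_eq_mul]
  grind

end Solvability

/-- Unconditional unique solvability of the second-order convex splitting scheme. -/
theorem scheme_unique_solvability (m n : ℕ) [NeZero m] [NeZero n]
    (β α s h : ℝ) (hβ : 0 < β) (hα : 0 < α) (hs : 0 < s) (hh : 0 < h)
    (φm φk ψk : Grid m n) :
    ∃! z : Grid m n × Grid m n, Scheme β α s h φm φk ψk z.1 z.2 := by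
  have hβs : 0 < 2 * β + s := by positivity
  obtain ⟨φn, hφn, hunique⟩ := existsUnique_sub_smul_lapH_chemPot_eq hα
    (div_nonneg (sq_nonneg s) hβs.le) h φm φk (φk + (2 * β * s / (2 * β + s)) • ψk)
  simp only [scheme_iff hs.ne' hβs.ne']
  refine ⟨(φn, (2 / s) • (φn - φk) - ψk), ⟨hφn, rfl⟩, ?_⟩
  rintro ⟨φ, ψ⟩ ⟨hφ, hψ⟩
  obtain rfl : φ = φn := hunique φ hφ
  exact Prod.ext rfl hψ
end
end
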